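/- Let H and H' be complex Hilbert spaces and let j ≥ 1 be an integer. For a bounded self-adjoint operator T on H' define its j-th minimax value μ_j(T) := inf over all j-dimensional subspaces F of H' of sup_{ψ∈F, ‖ψ‖=1} re⟨Tψ,ψ⟩. Let A be a bounded self-adjoint operator on H', B a bounded self-adjoint operator on H, U : H → H' a bounded operator, F₀ ⊆ H a subspace of dimension j, and constants C ≥ 0 and c ∈ [0,1) such that for every φ ∈ F₀: ‖U*AUφ − Bφ‖ ≤ C‖φ‖ and ‖U*Uφ − φ‖ ≤ c‖φ‖. Set λ := sup_{φ∈F₀, ‖φ‖=1} re⟨Bφ,φ⟩ and assume λ + C ≥ 0. Then U is injective on F₀ and μ_j(A) ≤ (λ + C)(1 + c/(1−c)). -/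

import Mathlib

/-!
The trial space is the image `F₀.map U`. On `F₀` the second hypothesis gives
`(1 - c) ‖φ‖² ≤ re ⟪U* U φ, φ⟫ = ‖U φ‖²`, so `U` is injective there and the image again has
dimension `j`. The first hypothesis gives
`re ⟪A U φ, U φ⟫ = re ⟪U* A U φ, φ⟫ ≤ re ⟪B φ, φ⟫ + C ‖φ‖² ≤ (λ + C) ‖φ‖²`, and since `λ + C ≥ 0`
this is at most `(λ + C) / (1 - c) ‖U φ‖²`, with `1 / (1 - c) = 1 + c / (1 - c)`.
As the infimum is over reals, it must also be checked that the competing suprema are bounded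
below; this uses `j ≥ 1`, which provides unit vectors.
-/

open scoped InnerProductSpace

/-- The `j`-th minimax value of a bounded operator `T` on a complex Hilbert space:
the infimum over all `j`-dimensional subspaces `F` of the supremum over unit vectors
`ψ ∈ F` of `re ⟪T ψ, ψ⟫`. -/
noncomputable def minimaxValue {H : Type*} [NormedAddCommGroup H] [InnerProductSpace ℂ H]
    (j : ℕ) (T : H →L[ℂ] H) : ℝ :=
  sInf {x : ℝ | ∃ F : Submodule ℂ H, Module.finrank ℂ F = j ∧
    x = sSup {y : ℝ | ∃ ψ : H, ψ ∈ F ∧ ‖ψ‖ = 1 ∧ y = (⟪T ψ, ψ⟫_ℂ).re}}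

lemma abs_re_inner_apply_le {H : Type*} [NormedAddCommGroup H] [InnerProductSpace ℂ H]
    (T : H →L[ℂ] H) {ψ : H} (hψ : ‖ψ‖ = 1) : |(⟪T ψ, ψ⟫_ℂ).re| ≤ ‖T‖ := by
  calc |(⟪T ψ, ψ⟫_ℂ).re| ≤ ‖⟪T ψ, ψ⟫_ℂ‖ := Complex.abs_re_le_norm _
    _ ≤ ‖T ψ‖ * ‖ψ‖ := norm_inner_le_norm _ _
    _ ≤ ‖T‖ := by simpa [hψ] using T.le_opNorm ψ

lemma bddAbove_re_inner {H : Type*} [NormedAddCommGroup H] [InnerProductSpace ℂ H]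
    (T : H →L[ℂ] H) (F : Submodule ℂ H) :
    BddAbove {y : ℝ | ∃ ψ : H, ψ ∈ F ∧ ‖ψ‖ = 1 ∧ y = (⟪T ψ, ψ⟫_ℂ).re} := by
  refine ⟨‖T‖, ?_⟩
  rintro y ⟨ψ, -, hψ, rfl⟩
  exact (le_abs_self _).trans (abs_re_inner_apply_le T hψ)

/-- The bound on unit vectors, extended to all vectors by homogeneity. -/
lemma re_inner_le_sSup_mul_sq {H : Type*} [NormedAddCommGroup H] [InnerProductSpace ℂ H]
    (T : H →L[ℂ] H) (F : Submodule ℂ H) {φ : H} (hφ : φ ∈ F) :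
    (⟪T φ, φ⟫_ℂ).re ≤
      sSup {y : ℝ | ∃ ψ : H, ψ ∈ F ∧ ‖ψ‖ = 1 ∧ y = (⟪T ψ, ψ⟫_ℂ).re} * ‖φ‖ ^ 2 := by
  rcases eq_or_ne φ 0 with rfl | h0
  · simp
  have hn : 0 < ‖φ‖ := norm_pos_iff.mpr h0
  have key := le_csSup (bddAbove_re_inner T F)
    ⟨((‖φ‖⁻¹ : ℝ) : ℂ) • φ, F.smul_mem _ hφ, by
      rw [norm_smul, Complex.norm_real, norm_inv, norm_norm, inv_mul_cancel₀ hn.ne'], rfl⟩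
  rw [map_smul, inner_smul_left, inner_smul_right, Complex.conj_ofReal,
    Complex.re_ofReal_mul, Complex.re_ofReal_mul] at key
  calc (⟪T φ, φ⟫_ℂ).re = (‖φ‖⁻¹ * (‖φ‖⁻¹ * (⟪T φ, φ⟫_ℂ).re)) * ‖φ‖ ^ 2 := by
        field_simp
    _ ≤ _ := mul_le_mul_of_nonneg_right key (sq_nonneg _)

/-- With `j ≥ 1`, no competing supremum is below `-‖T‖`, so the infimum is a genuine one. -/
lemma minimaxValue_le {H : Type*} [NormedAddCommGroup H] [InnerProductSpace ℂ H]
    {j : ℕ} (hj : 1 ≤ j) (T : H →L[ℂ] H) (F : Submodule ℂ H) (hF : Module.finrank ℂ F = j) :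
    minimaxValue j T ≤ sSup {y : ℝ | ∃ ψ : H, ψ ∈ F ∧ ‖ψ‖ = 1 ∧ y = (⟪T ψ, ψ⟫_ℂ).re} := by
  refine csInf_le ⟨-‖T‖, ?_⟩ ⟨F, hF, rfl⟩
  rintro x ⟨G, hG, rfl⟩
  have : Nontrivial G := Module.nontrivial_of_finrank_pos (R := ℂ) (by omega)
  obtain ⟨ψ, hψ⟩ : ∃ ψ : G, ‖ψ‖ = 1 := exists_norm_eq G zero_le_one
  exact (neg_le_of_abs_le (abs_re_inner_apply_le T hψ)).trans
    (le_csSup (bddAbove_re_inner T G) ⟨ψ, ψ.2, hψ, rfl⟩)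

/-- Cauchy–Schwarz turns an approximation in norm into one of quadratic forms. -/
lemma abs_re_inner_sub_le {H : Type*} [NormedAddCommGroup H] [InnerProductSpace ℂ H]
    {x y φ : H} {K : ℝ} (h : ‖x - y‖ ≤ K * ‖φ‖) :
    |(⟪x, φ⟫_ℂ).re - (⟪y, φ⟫_ℂ).re| ≤ K * ‖φ‖ ^ 2 := by
  rw [← Complex.sub_re, ← inner_sub_left]
  calc |(⟪x - y, φ⟫_ℂ).re| ≤ ‖⟪x - y, φ⟫_ℂ‖ := Complex.abs_re_le_norm _
    _ ≤ ‖x - y‖ * ‖φ‖ := norm_inner_le_norm _ _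
    _ ≤ K * ‖φ‖ * ‖φ‖ := mul_le_mul_of_nonneg_right h (norm_nonneg _)
    _ = K * ‖φ‖ ^ 2 := by ring

theorem stmt1 {H H' : Type*} [NormedAddCommGroup H] [InnerProductSpace ℂ H] [CompleteSpace H]
    [NormedAddCommGroup H'] [InnerProductSpace ℂ H'] [CompleteSpace H']
    (j : ℕ) (hj : 1 ≤ j)
    (A : H' →L[ℂ] H') (B : H →L[ℂ] H) (hA : IsSelfAdjoint A) (hB : IsSelfAdjoint B)
    (U : H →L[ℂ] H')
    (F₀ : Submodule ℂ H) (hF₀ : Module.finrank ℂ F₀ = j)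
    (C c : ℝ) (hC : 0 ≤ C) (hc : 0 ≤ c) (hc1 : c < 1)
    (h1 : ∀ φ ∈ F₀, ‖ContinuousLinearMap.adjoint U (A (U φ)) - B φ‖ ≤ C * ‖φ‖)
    (h2 : ∀ φ ∈ F₀, ‖ContinuousLinearMap.adjoint U (U φ) - φ‖ ≤ c * ‖φ‖)
    (lam : ℝ)
    (hlam : lam = sSup {y : ℝ | ∃ φ : H, φ ∈ F₀ ∧ ‖φ‖ = 1 ∧ y = (⟪B φ, φ⟫_ℂ).re})
    (hlamC : 0 ≤ lam + C) :
    Set.InjOn U (F₀ : Set H) ∧ minimaxValue j A ≤ (lam + C) * (1 + c / (1 - c)) := by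
  have hc' : 0 < 1 - c := by linarith
  have lower : ∀ φ ∈ F₀, (1 - c) * ‖φ‖ ^ 2 ≤ ‖U φ‖ ^ 2 := by
    intro φ hφ
    have h := neg_le_of_abs_le (abs_re_inner_sub_le (h2 φ hφ))
    rw [ContinuousLinearMap.adjoint_inner_left, inner_self_eq_norm_sq_to_K,
      inner_self_eq_norm_sq_to_K] at h
    simp only [Complex.coe_algebraMap, ← Complex.ofReal_pow, Complex.ofReal_re] at h
    linarith
  have upper : ∀ φ ∈ F₀, (⟪A (U φ), U φ⟫_ℂ).re ≤ (lam + C) * ‖φ‖ ^ 2 := by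
    intro φ hφ
    have h := le_of_abs_le (abs_re_inner_sub_le (h1 φ hφ))
    rw [ContinuousLinearMap.adjoint_inner_left] at h
    have hB' := re_inner_le_sSup_mul_sq B F₀ hφ
    rw [← hlam] at hB'
    linarith
  have hinj : Set.InjOn U (F₀ : Set H) := by
    intro x hx y hy hxy
    have h := lower (x - y) (F₀.sub_mem hx hy)
    rw [map_sub, sub_eq_zero.mpr hxy, norm_zero] at h
    have h0 : ‖x - y‖ ^ 2 = 0 := by nlinarith [sq_nonneg ‖x - y‖]
    exact sub_eq_zero.mp (norm_eq_zero.mp (pow_eq_zero_iff two_ne_zero |>.mp h0))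
  refine ⟨hinj, ?_⟩
  have hdim : Module.finrank ℂ (F₀.map (U : H →ₗ[ℂ] H')) = j := by
    have hinj' : Function.Injective ((U : H →ₗ[ℂ] H').domRestrict F₀) :=
      fun x y hxy => Subtype.ext (hinj x.2 y.2 hxy)
    rw [← hF₀, ← LinearMap.range_domRestrict]
    exact LinearMap.finrank_range_of_inj hinj'
  refine (minimaxValue_le hj A _ hdim).trans (Real.sSup_le ?_ ?_)
  · rintro y ⟨ψ, ⟨φ, hφ, rfl⟩, hψ, rfl⟩
    have hl := lower φ hφ
    change ‖U φ‖ = 1 at hψ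
    rw [hψ, one_pow] at hl
    have hfac : ‖φ‖ ^ 2 ≤ 1 + c / (1 - c) := by
      have : 1 + c / (1 - c) = 1 / (1 - c) := by field_simp; ring
      rw [this, le_div_iff₀ hc']
      linarith
    exact (upper φ hφ).trans (mul_le_mul_of_nonneg_left hfac hlamC)
  · positivity
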